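/- For a function f of sublinear growth on the standard Cayley graph of ℤ^d that is harmonic, f is constant. (Special case: any harmonic function on ℤ with f(n) = (f(n−1)+f(n+1))/2 and f(n)/|n| → 0 as |n| → ∞ is constant.) -/

import Mathlib

open Filter

/-!
The difference `f - f ∘ σ`, where `σ` reflects `xᵢ ↦ 1 - xᵢ`, is harmonic and odd under `σ`. On the
half-box `‖x‖ ≤ R`, `0 < xᵢ` it is compared with a quadratic barrier by the minimum principle: if
`|f| ≤ M` on the box of radius `R`, then `|f eᵢ - f 0| = O(M / R)`. Translating the origin and
letting `R → ∞` shows that a harmonic `f` with `M = o(R)` is invariant under every unit translation.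
-/

open Asymptotics Function

section Periodic

variable {ι β : Type*} [Finite ι] [DecidableEq ι]

lemma eq_of_forall_periodic_single {f : (ι → ℤ) → β}
    (hf : ∀ i, Periodic f (Pi.single i 1)) (v w : ι → ℤ) : f v = f w := by
  have hper (u : ι → ℤ) : Periodic f u := by
    induction u using Pi.single_induction with
    | zero => exact fun x => by rw [add_zero]
    | add u u' hu hu' => exact hu.add_period hu'
    | single i m => simpa only [← Pi.single_smul, smul_eq_mul, mul_one] using (hf i).zsmul m
  simpa only [add_sub_cancel] using (hper (w - v) v).symm

end Periodic

section Norm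

variable {ι : Type*} [Fintype ι]

lemma eventually_forall_norm_le_mul_of_isLittleO {E F : Type*} [SeminormedAddCommGroup E]
    [SeminormedAddCommGroup F] {f : E → F} (hf : f =o[cofinite] fun x => ‖x‖) {ε : ℝ}
    (hε : 0 < ε) : ∀ᶠ R : ℝ in atTop, ∀ x, ‖x‖ ≤ R → ‖f x‖ ≤ ε * R := by
  have hexc : {x | ¬ ‖f x‖ ≤ ε * ‖x‖}.Finite := by
    simpa only [norm_norm] using eventually_cofinite.1 (hf.bound hε)
  have hlarge (x : E) : ∀ᶠ R : ℝ in atTop, ‖f x‖ ≤ ε * R :=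
    (tendsto_id.const_mul_atTop hε).eventually_ge_atTop _
  filter_upwards [(eventually_all_finite hexc).2 fun x _ => hlarge x] with R hR x hx
  by_cases hfx : ‖f x‖ ≤ ε * ‖x‖
  · exact hfx.trans (by gcongr)
  · exact hR x hfx

lemma abs_apply_le_norm (x : ι → ℤ) (i : ι) : |(x i : ℝ)| ≤ ‖x‖ := by
  simpa only [Int.norm_eq_abs] using norm_le_pi_norm x i

lemma one_add_sum_abs_le_mul_norm {x : ι → ℤ} (hx : x ≠ 0) :
    1 + ((∑ i, |x i| : ℤ) : ℝ) ≤ (1 + Fintype.card ι) * ‖x‖ := by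
  have hone : 1 ≤ ‖x‖ := by
    obtain ⟨i, hi⟩ := Function.ne_iff.1 hx
    exact le_trans (by exact_mod_cast Int.one_le_abs hi) (abs_apply_le_norm x i)
  have hsum : ∑ i, |(x i : ℝ)| ≤ Fintype.card ι * ‖x‖ := by
    rw [← nsmul_eq_mul]
    exact Finset.sum_le_card_nsmul _ _ _ fun i _ => abs_apply_le_norm x i
  push_cast
  linarith

lemma isLittleO_norm_of_tendsto_div {f : (ι → ℤ) → ℝ}
    (hf : Tendsto (fun v => |f v| / (1 + (∑ i, |v i| : ℤ))) cofinite (nhds 0)) :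
    f =o[cofinite] fun v => ‖v‖ := by
  have hpos (v : ι → ℤ) : 0 < 1 + ((∑ i, |v i| : ℤ) : ℝ) := by positivity
  refine ((isLittleO_of_tendsto (fun v hv => absurd hv (hpos v).ne') hf).of_abs_left).trans_isBigO
    (IsBigO.of_bound (1 + Fintype.card ι) ?_)
  filter_upwards [(Set.finite_singleton (0 : ι → ℤ)).compl_mem_cofinite] with v hv
  rw [norm_norm, Real.norm_of_nonneg (hpos v).le]
  exact one_add_sum_abs_le_mul_norm hv

lemma norm_le_natCast_iff_abs_le {x : ι → ℤ} {R : ℕ} : ‖x‖ ≤ R ↔ ∀ j, |x j| ≤ R := by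
  rw [pi_norm_le_iff_of_nonneg R.cast_nonneg]
  refine forall_congr' fun j => ?_
  rw [Int.norm_eq_abs]
  exact_mod_cast Iff.rfl

lemma norm_add_single_unit_le [DecidableEq ι] {x : ι → ℤ} {R : ℕ} (hx : ‖x‖ < R) (j : ι)
    (u : ℤˣ) : ‖x + Pi.single j (u : ℤ)‖ ≤ R := by
  refine norm_le_natCast_iff_abs_le.2 fun k => (abs_add_le _ _).trans ?_
  have hxk : |x k| < R := by
    exact_mod_cast (abs_apply_le_norm x k).trans_lt hx
  have huk : |(Pi.single j (u : ℤ) : ι → ℤ) k| ≤ 1 := by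
    obtain rfl | hk := eq_or_ne k j
    · rw [Pi.single_eq_same, Int.isUnit_iff_abs_eq.1 u.isUnit]
    · rw [Pi.single_eq_of_ne hk, abs_zero]
      exact zero_le_one
  omega

end Norm

section Laplacian

variable {ι : Type*} [Fintype ι] [DecidableEq ι]

/-- The combinatorial Laplacian of the standard Cayley graph of `ℤ^ι`, not normalised by the degree
`2 |ι|`. A function is harmonic when it is annihilated by it. -/
def latticeLaplacian : ((ι → ℤ) → ℝ) →ₗ[ℝ] (ι → ℤ) → ℝ where
  toFun f x := ∑ j, (f (x + Pi.single j 1) + f (x - Pi.single j 1) - 2 * f x)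
  map_add' f g := by
    ext x
    simp only [Pi.add_apply, ← Finset.sum_add_distrib]
    exact Finset.sum_congr rfl fun j _ => by ring
  map_smul' c f := by
    ext x
    simp only [Pi.smul_apply, smul_eq_mul, RingHom.id_apply, Finset.mul_sum]
    exact Finset.sum_congr rfl fun j _ => by ring

lemma latticeLaplacian_apply (f : (ι → ℤ) → ℝ) (x : ι → ℤ) :
    latticeLaplacian f x =
      ∑ j, (f (x + Pi.single j 1) + f (x - Pi.single j 1) - 2 * f x) :=
  rfl

lemma latticeLaplacian_eq_zero_iff {f : (ι → ℤ) → ℝ} {x : ι → ℤ} :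
    latticeLaplacian f x = 0 ↔
      2 * Fintype.card ι * f x = ∑ j, (f (x + Pi.single j 1) + f (x - Pi.single j 1)) := by
  rw [latticeLaplacian_apply, Finset.sum_sub_distrib, sub_eq_zero, eq_comm, Finset.sum_const,
    Finset.card_univ, nsmul_eq_mul, mul_left_comm, mul_assoc]

lemma latticeLaplacian_comp_add_left (f : (ι → ℤ) → ℝ) (v x : ι → ℤ) :
    latticeLaplacian (fun y => f (v + y)) x = latticeLaplacian f (v + x) := by
  simp only [latticeLaplacian_apply, add_assoc, add_sub_assoc]

lemma latticeLaplacian_comp_eval (φ : ℤ → ℝ) (i : ι) (x : ι → ℤ) :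
    latticeLaplacian (fun y => φ (y i)) x = φ (x i + 1) + φ (x i - 1) - 2 * φ (x i) := by
  rw [latticeLaplacian_apply, Finset.sum_eq_single i]
  · simp only [Pi.add_apply, Pi.sub_apply, Pi.single_eq_same]
  · intro j _ hj
    simp only [Pi.add_apply, Pi.sub_apply, Pi.single_eq_of_ne hj.symm, add_zero, sub_zero]
    ring
  · exact fun hi => absurd (Finset.mem_univ i) hi

lemma exists_lt_of_latticeLaplacian_neg {h : (ι → ℤ) → ℝ} {x : ι → ℤ}
    (hx : latticeLaplacian h x < 0) : ∃ j, ∃ u : ℤˣ, h (x + Pi.single j (u : ℤ)) < h x := by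
  obtain ⟨j, -, hj⟩ := Finset.exists_lt_of_sum_lt
    (hx.trans_eq (Finset.sum_const_zero (s := Finset.univ (α := ι))).symm)
  by_cases hadd : h (x + Pi.single j 1) < h x
  · exact ⟨j, 1, by simpa only [Units.val_one] using hadd⟩
  · refine ⟨j, -1, ?_⟩
    rw [Units.val_neg, Units.val_one, Pi.single_neg, ← sub_eq_add_neg]
    linarith

lemma nonneg_of_latticeLaplacian_neg {s : Set (ι → ℤ)} (hs : s.Finite) {h : (ι → ℤ) → ℝ}
    (hΔ : ∀ x ∈ s, h x < 0 → latticeLaplacian h x < 0)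
    (hbdry : ∀ x ∈ s, h x < 0 → ∀ j, ∀ u : ℤˣ, x + Pi.single j (u : ℤ) ∉ s →
      h x ≤ h (x + Pi.single j (u : ℤ))) :
    ∀ x ∈ s, 0 ≤ h x := by
  intro z hz
  obtain ⟨x, hx, hmin⟩ := Set.exists_min_image s h hs ⟨z, hz⟩
  refine le_trans (not_lt.1 fun hneg => ?_) (hmin z hz)
  obtain ⟨j, u, hlt⟩ := exists_lt_of_latticeLaplacian_neg (hΔ x hx hneg)
  by_cases hmem : x + Pi.single j (u : ℤ) ∈ s
  · exact (hmin _ hmem).not_gt hlt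
  · exact (hbdry x hx hneg j u hmem).not_gt hlt

end Laplacian

section Reflection

variable {ι : Type*} [DecidableEq ι]

/-- The reflection of `ℤ^ι` that exchanges the hyperplanes `xᵢ = 0` and `xᵢ = 1`. -/
def latticeReflection (i : ι) (x : ι → ℤ) : ι → ℤ :=
  update x i (1 - x i)

lemma latticeReflection_latticeReflection (i : ι) (x : ι → ℤ) :
    latticeReflection i (latticeReflection i x) = x := by
  simp [latticeReflection]

lemma latticeReflection_single (i : ι) : latticeReflection i (Pi.single i 1) = 0 := by
  simp [latticeReflection, Pi.single]

lemma latticeReflection_add_single_self (i : ι) (x : ι → ℤ) (m : ℤ) :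
    latticeReflection i (x + Pi.single i m) = latticeReflection i x - Pi.single i m := by
  ext k
  obtain rfl | hk := eq_or_ne k i
  · simp only [latticeReflection, update_self, Pi.add_apply, Pi.sub_apply, Pi.single_eq_same]
    ring
  · simp [latticeReflection, hk]

lemma latticeReflection_add_single_of_ne {i j : ι} (hij : i ≠ j) (x : ι → ℤ) (m : ℤ) :
    latticeReflection i (x + Pi.single j m) = latticeReflection i x + Pi.single j m := by
  ext k
  obtain rfl | hk := eq_or_ne k i
  · simp [latticeReflection, hij]
  · simp [latticeReflection, hk]

lemma eq_one_and_latticeReflection_eq {i j : ι} {x : ι → ℤ} {u : ℤˣ} (hx : 0 < x i)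
    (hxu : (x + Pi.single j (u : ℤ) : ι → ℤ) i ≤ 0) :
    x i = 1 ∧ latticeReflection i x = x + Pi.single j (u : ℤ) := by
  obtain rfl | hij := eq_or_ne i j
  · have hu := Int.isUnit_iff.1 u.isUnit
    rw [Pi.add_apply, Pi.single_eq_same] at hxu
    obtain ⟨hxi, hui⟩ : x i = 1 ∧ (u : ℤ) = -1 := by omega
    refine ⟨hxi, funext fun k => ?_⟩
    obtain rfl | hk := eq_or_ne k i
    · rw [latticeReflection, update_self, Pi.add_apply, Pi.single_eq_same, hxi, hui]
      rfl
    · rw [latticeReflection, update_of_ne hk, Pi.add_apply, Pi.single_eq_of_ne hk, add_zero]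
  · rw [Pi.add_apply, Pi.single_eq_of_ne hij, add_zero] at hxu
    exact absurd hx hxu.not_gt

variable [Fintype ι]

lemma latticeLaplacian_comp_latticeReflection (f : (ι → ℤ) → ℝ) (i : ι) (x : ι → ℤ) :
    latticeLaplacian (f ∘ latticeReflection i) x = latticeLaplacian f (latticeReflection i x) := by
  simp only [latticeLaplacian_apply, comp_apply, sub_eq_add_neg, ← Pi.single_neg]
  refine Finset.sum_congr rfl fun j _ => ?_
  obtain rfl | hij := eq_or_ne i j
  · simp only [latticeReflection_add_single_self, sub_eq_add_neg, ← Pi.single_neg, neg_neg]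
    ring
  · simp only [latticeReflection_add_single_of_ne hij]

lemma norm_latticeReflection_le {i : ι} {x : ι → ℤ} (hx : 0 < x i) :
    ‖latticeReflection i x‖ ≤ ‖x‖ := by
  refine (pi_norm_le_iff_of_nonneg (norm_nonneg x)).2 fun j => le_trans ?_ (norm_le_pi_norm x j)
  obtain rfl | hj := eq_or_ne j i
  · rw [latticeReflection, update_self, Int.norm_eq_abs, Int.norm_eq_abs]
    exact_mod_cast abs_le_abs (by omega) (by omega)
  · rw [latticeReflection, update_of_ne hj]

end Reflection

section Gradient

variable {ι : Type*} [Fintype ι]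

/-- A quadratic function with Laplacian `-2` which dominates `‖x‖ ^ 2` on the slab `0 ≤ xᵢ ≤ R`. -/
def slabBarrier (i : ι) (R : ℝ) (x : ι → ℤ) : ℝ :=
  (Fintype.card ι + 1) * (x i * (R - x i)) + ∑ j, (x j : ℝ) ^ 2

lemma sq_norm_le_slabBarrier {i : ι} {R : ℝ} {x : ι → ℤ} (hx : 0 ≤ x i) (hxR : x i ≤ R) :
    ‖x‖ ^ 2 ≤ slabBarrier i R x := by
  have hcoord (j : ι) : (x j : ℝ) ^ 2 ≤ slabBarrier i R x := by
    have hsq : (x j : ℝ) ^ 2 ≤ ∑ k, (x k : ℝ) ^ 2 :=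
      Finset.single_le_sum (f := fun k => (x k : ℝ) ^ 2) (fun k _ => sq_nonneg _)
        (Finset.mem_univ j)
    have hslab : 0 ≤ (x i : ℝ) * (R - x i) :=
      mul_nonneg (by exact_mod_cast hx) (sub_nonneg.2 hxR)
    exact le_add_of_nonneg_of_le (mul_nonneg (by positivity) hslab) hsq
  have hsqrt : ‖x‖ ≤ √(slabBarrier i R x) := by
    refine (pi_norm_le_iff_of_nonneg (Real.sqrt_nonneg _)).2 fun j => ?_
    rw [Int.norm_eq_abs]
    exact Real.abs_le_sqrt (hcoord j)
  exact (Real.le_sqrt (norm_nonneg x) ((sq_nonneg _).trans (hcoord i))).1 hsqrt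

lemma sq_norm_le_slabBarrier_of_norm_le {i : ι} {R : ℝ} {x : ι → ℤ} (hx : ‖x‖ ≤ R)
    (hxi : 0 ≤ x i) : ‖x‖ ^ 2 ≤ slabBarrier i R x :=
  sq_norm_le_slabBarrier hxi ((le_abs_self _).trans ((abs_apply_le_norm x i).trans hx))

variable [DecidableEq ι]

lemma latticeLaplacian_slabBarrier (i : ι) (R : ℝ) (x : ι → ℤ) :
    latticeLaplacian (slabBarrier i R) x = -2 := by
  have hsum : slabBarrier i R =
      (Fintype.card ι + 1 : ℝ) • (fun y : ι → ℤ => (y i : ℝ) * (R - y i)) +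
        ∑ j, fun y : ι → ℤ => (y j : ℝ) ^ 2 := by
    ext y
    simp only [slabBarrier, Pi.add_apply, Pi.smul_apply, Finset.sum_apply, smul_eq_mul]
  have hslab : latticeLaplacian (fun y => (y i : ℝ) * (R - y i)) x = -2 := by
    rw [latticeLaplacian_comp_eval fun m : ℤ => (m : ℝ) * (R - m)]
    push_cast
    ring
  have hsq (j : ι) : latticeLaplacian (fun y => (y j : ℝ) ^ 2) x = 2 := by
    rw [latticeLaplacian_comp_eval fun m : ℤ => (m : ℝ) ^ 2]
    push_cast
    ring
  rw [hsum, map_add, map_smul, map_sum, Pi.add_apply, Pi.smul_apply, Finset.sum_apply, hslab]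
  simp only [hsq, Finset.sum_const, Finset.card_univ, nsmul_eq_mul, smul_eq_mul]
  ring

lemma slabBarrier_single_le (i : ι) {R : ℝ} :
    slabBarrier i R (Pi.single i 1) ≤ (Fintype.card ι + 1) * R := by
  have hsq : ∑ j, (((Pi.single i 1 : ι → ℤ) j : ℤ) : ℝ) ^ 2 = 1 := by
    simp [Pi.single_apply]
  rw [slabBarrier, hsq, Pi.single_eq_same]
  push_cast
  linarith [(Fintype.card ι).cast_nonneg (α := ℝ)]

/-- The comparison function of the gradient estimate: the amount by which the barrier, scaled to
match the bound `|f| ≤ M` at `‖x‖ = R`, exceeds the increment of `f` across the reflection. It is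
multiplied by `R ^ 2` so that no division occurs. -/
def reflectionGap (f : (ι → ℤ) → ℝ) (i : ι) (R M : ℝ) : (ι → ℤ) → ℝ :=
  (2 * M) • slabBarrier i R - R ^ 2 • (f - f ∘ latticeReflection i)

lemma reflectionGap_apply (f : (ι → ℤ) → ℝ) (i : ι) (R M : ℝ) (x : ι → ℤ) :
    reflectionGap f i R M x =
      2 * M * slabBarrier i R x - R ^ 2 * (f x - f (latticeReflection i x)) :=
  rfl

lemma latticeLaplacian_reflectionGap {f : (ι → ℤ) → ℝ} {i : ι} {x : ι → ℤ} (R M : ℝ)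
    (hx : latticeLaplacian f x = 0) (hσx : latticeLaplacian f (latticeReflection i x) = 0) :
    latticeLaplacian (reflectionGap f i R M) x = -(4 * M) := by
  simp only [reflectionGap, map_sub, map_smul, Pi.sub_apply, Pi.smul_apply, smul_eq_mul,
    latticeLaplacian_slabBarrier, latticeLaplacian_comp_latticeReflection, hx, hσx]
  ring

lemma reflectionGap_add_reflectionGap_latticeReflection (f : (ι → ℤ) → ℝ) (i : ι) (R M : ℝ)
    (x : ι → ℤ) :
    reflectionGap f i R M x + reflectionGap f i R M (latticeReflection i x) =
      2 * M * (slabBarrier i R x + slabBarrier i R (latticeReflection i x)) := by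
  rw [reflectionGap_apply, reflectionGap_apply, latticeReflection_latticeReflection]
  ring

lemma pos_and_norm_lt_of_reflectionGap_neg {f : (ι → ℤ) → ℝ} {R M : ℝ}
    (hM : ∀ x, ‖x‖ ≤ R → |f x| ≤ M) {i : ι} {x : ι → ℤ} (hx : ‖x‖ ≤ R) (hxi : 0 < x i)
    (hneg : reflectionGap f i R M x < 0) : 0 < M ∧ ‖x‖ < R := by
  have hM0 : 0 ≤ M := (abs_nonneg _).trans (hM x hx)
  have hdiff : f x - f (latticeReflection i x) ≤ 2 * M := by
    have hfx := abs_le.1 (hM x hx)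
    have hfσx := abs_le.1 (hM _ ((norm_latticeReflection_le hxi).trans hx))
    linarith [hfx.2, hfσx.1]
  have hsq : 2 * M * ‖x‖ ^ 2 < 2 * M * R ^ 2 := calc
    2 * M * ‖x‖ ^ 2 ≤ 2 * M * slabBarrier i R x := by
      gcongr
      exact sq_norm_le_slabBarrier_of_norm_le hx hxi.le
    _ < R ^ 2 * (f x - f (latticeReflection i x)) := sub_neg.1 hneg
    _ ≤ R ^ 2 * (2 * M) := by gcongr
    _ = 2 * M * R ^ 2 := mul_comm _ _
  constructor
  · refine hM0.lt_of_ne fun h0 => ?_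
    simp only [← h0, mul_zero, zero_mul, lt_irrefl] at hsq
  · exact lt_of_pow_lt_pow_left₀ 2 ((norm_nonneg x).trans hx)
      (lt_of_mul_lt_mul_left hsq (mul_nonneg zero_le_two hM0))

lemma reflectionGap_nonneg {f : (ι → ℤ) → ℝ} {R : ℕ} {M : ℝ}
    (hf : ∀ x, ‖x‖ < R → latticeLaplacian f x = 0) (hM : ∀ x, ‖x‖ ≤ R → |f x| ≤ M) {i : ι}
    {x : ι → ℤ} (hx : ‖x‖ ≤ R) (hxi : 0 < x i) : 0 ≤ reflectionGap f i R M x := by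
  let s : Set (ι → ℤ) := {y | ‖y‖ ≤ R ∧ 0 < y i}
  have hs : s.Finite := (isCompact_closedBall (0 : ι → ℤ) R).finite_of_discrete.subset
    fun y hy => mem_closedBall_zero_iff.2 hy.1
  refine nonneg_of_latticeLaplacian_neg hs (fun y hy hneg => ?_) (fun y hy hneg j u hyu => ?_)
    x ⟨hx, hxi⟩
  all_goals obtain ⟨hM0, hyR⟩ := pos_and_norm_lt_of_reflectionGap_neg hM hy.1 hy.2 hneg
  · have hσyR := (norm_latticeReflection_le hy.2).trans_lt hyR
    rw [latticeLaplacian_reflectionGap R M (hf y hyR) (hf _ hσyR)]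
    linarith
  · have hyuR := norm_add_single_unit_le hyR j u
    have hyui : (y + Pi.single j (u : ℤ) : ι → ℤ) i ≤ 0 := not_lt.1 fun hpos => hyu ⟨hyuR, hpos⟩
    -- A step that leaves `s` through the face `yᵢ = 1` lands on the mirror image of `y`, where
    -- `f - f ∘ σ` takes the opposite value.
    obtain ⟨hyi, hσy⟩ := eq_one_and_latticeReflection_eq hy.2 hyui
    rw [← hσy] at hyuR ⊢
    have hσyi : 0 ≤ latticeReflection i y i := by
      rw [latticeReflection, update_self, hyi, sub_self]
    have hb : 0 ≤ slabBarrier i R y :=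
      (sq_nonneg _).trans (sq_norm_le_slabBarrier_of_norm_le hy.1 hy.2.le)
    have hbσ : 0 ≤ slabBarrier i R (latticeReflection i y) :=
      (sq_nonneg _).trans (sq_norm_le_slabBarrier_of_norm_le hyuR hσyi)
    have hsum := (mul_nonneg (mul_nonneg zero_le_two hM0.le) (add_nonneg hb hbσ)).trans_eq
      (reflectionGap_add_reflectionGap_latticeReflection f i R M y).symm
    linarith

lemma sub_le_of_latticeLaplacian_eq_zero {f : (ι → ℤ) → ℝ} {R : ℕ} {M : ℝ} (hR : 0 < R)
    (hf : ∀ x, ‖x‖ < R → latticeLaplacian f x = 0) (hM : ∀ x, ‖x‖ ≤ R → |f x| ≤ M) (i : ι) :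
    f (Pi.single i 1) - f 0 ≤ 2 * (Fintype.card ι + 1) * M / R := by
  have hM0 : 0 ≤ M := (abs_nonneg _).trans (hM 0 (norm_zero.trans_le R.cast_nonneg))
  have hR' : (0 : ℝ) < R := Nat.cast_pos.2 hR
  have hsingle : ‖(Pi.single i 1 : ι → ℤ)‖ ≤ R := by
    rw [Pi.norm_single, norm_one]
    exact_mod_cast hR
  have hcomparison : R ^ 2 * (f (Pi.single i 1) - f 0) ≤
      2 * M * ((Fintype.card ι + 1) * R) := calc
    R ^ 2 * (f (Pi.single i 1) - f 0) ≤ 2 * M * slabBarrier i R (Pi.single i 1) := by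
      rw [← latticeReflection_single i]
      exact sub_nonneg.1 (reflectionGap_nonneg hf hM hsingle
        (by rw [Pi.single_eq_same]; exact one_pos))
    _ ≤ 2 * M * ((Fintype.card ι + 1) * R) := by
      gcongr
      exact slabBarrier_single_le i
  rw [le_div_iff₀ hR']
  exact le_of_mul_le_mul_left (by linarith) hR'

theorem abs_sub_le_of_latticeLaplacian_eq_zero {f : (ι → ℤ) → ℝ} {v : ι → ℤ} {R : ℕ} {M : ℝ}
    (hR : 0 < R) (hf : ∀ x, ‖x - v‖ < R → latticeLaplacian f x = 0)
    (hM : ∀ x, ‖x - v‖ ≤ R → |f x| ≤ M) (i : ι) :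
    |f (v + Pi.single i 1) - f v| ≤ 2 * (Fintype.card ι + 1) * M / R := by
  let g : (ι → ℤ) → ℝ := fun x => f (v + x)
  have hg (x : ι → ℤ) (hx : ‖x‖ < R) : latticeLaplacian g x = 0 := by
    rw [latticeLaplacian_comp_add_left]
    exact hf _ (by rwa [add_sub_cancel_left])
  have hgM (x : ι → ℤ) (hx : ‖x‖ ≤ R) : |g x| ≤ M := hM _ (by rwa [add_sub_cancel_left])
  have hupper := sub_le_of_latticeLaplacian_eq_zero hR hg hgM i
  have hlower := sub_le_of_latticeLaplacian_eq_zero (f := -g) hR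
    (fun x hx => by rw [map_neg, Pi.neg_apply, hg x hx, neg_zero])
    (fun x hx => by rw [Pi.neg_apply, abs_neg]; exact hgM x hx) i
  simp only [g, Pi.neg_apply, add_zero] at hupper hlower
  exact abs_le.2 ⟨by linarith, hupper⟩

end Gradient

theorem harmonic_sublinear_Zd_constant_general {ι : Type*} [Fintype ι] [DecidableEq ι]
    {f : (ι → ℤ) → ℝ} (hf : latticeLaplacian f = 0)
    (hsub : ∀ ε > 0, ∃ᶠ R : ℕ in atTop, ∀ x, ‖x‖ ≤ R → |f x| ≤ ε * R) (v w : ι → ℤ) :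
    f v = f w := by
  refine eq_of_forall_periodic_single (fun i x => ?_) v w
  refine eq_of_abs_sub_le_all fun ε hε => ?_
  obtain ⟨N, hN⟩ := exists_nat_ge ‖x‖
  let δ : ℝ := ε / (4 * (Fintype.card ι + 1))
  obtain ⟨R, hR, hbound⟩ := frequently_atTop.1 (hsub δ (by positivity)) (2 * N + 1)
  obtain ⟨m, rfl⟩ := Nat.exists_eq_add_of_le (show N ≤ R by omega)
  have hm : 0 < m := by omega
  have hNm : ((N + m : ℕ) : ℝ) ≤ 2 * m := by exact_mod_cast (by omega : N + m ≤ 2 * m)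
  have hball (y : ι → ℤ) (hy : ‖y - x‖ ≤ m) : |f y| ≤ δ * (2 * m) := by
    refine (hbound y ?_).trans (by gcongr)
    push_cast
    linarith [norm_le_norm_add_norm_sub' y x]
  calc |f (x + Pi.single i 1) - f x|
      ≤ 2 * (Fintype.card ι + 1) * (δ * (2 * m)) / m :=
        abs_sub_le_of_latticeLaplacian_eq_zero hm (fun y _ => congrFun hf y) hball i
    _ = ε := by
      simp only [δ]
      field_simp
      norm_num

/-- A harmonic function of sublinear growth on the standard Cayley graph of `ℤ^d`
is constant.  Harmonicity: `2d · f(v) = Σᵢ (f(v + eᵢ) + f(v − eᵢ))`; sublinear growth: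
`|f(v)|/(1 + Σᵢ|vᵢ|) → 0` as `v → ∞`. -/
theorem harmonic_sublinear_Zd_constant (d : ℕ) (hd : 1 ≤ d) (f : (Fin d → ℤ) → ℝ)
    (hharm : ∀ v : Fin d → ℤ, (2 * d : ℝ) * f v =
      ∑ i : Fin d, (f (v + Pi.single i 1) + f (v - Pi.single i 1)))
    (hsub : Tendsto (fun v : Fin d → ℤ => |f v| / (1 + (∑ i, |v i| : ℤ))) cofinite
      (nhds 0)) :
    ∀ v w, f v = f w :=
  harmonic_sublinear_Zd_constant_general
    (funext fun v => latticeLaplacian_eq_zero_iff.2 (by rw [Fintype.card_fin]; exact hharm v))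
    fun _ hε => (tendsto_natCast_atTop_atTop.eventually <|
      eventually_forall_norm_le_mul_of_isLittleO
        (isLittleO_norm_of_tendsto_div hsub) hε).frequently
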